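/- In the twin prime power construction, for every nonzero β ∈ K one has N_β · (I_{q+2} ⊗ J_{q²}) = (I_{q+2} ⊗ J_{q²}) · N_β = q·(J_{(q+2)q²} − I_{q+2} ⊗ J_{q²}). -/

import Mathlib

open Matrix Kronecker BigOperators

noncomputable section

/-- The all-ones matrix. -/
def allOnes (n : Type*) : Matrix n n ℝ := Matrix.of fun _ _ => 1

/-- The auxiliary matrices `C_a` for `a ∈ F ∪ {y}` (formally `Option F`, with `none`
playing the role of the extra symbol `y`, so that `C_y = I_q ⊗ J_q`). -/
def auxC {F : Type*} [Field F] [Fintype F] [DecidableEq F] :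
    Option F → Matrix (F × F) (F × F) ℝ
  | some α => Matrix.of fun p r => if r.2 - p.2 = α * (r.1 - p.1) then 1 else 0
  | none => Matrix.of fun p r => if p.1 = r.1 then 1 else 0

/-- The permutation matrix `P_{β,γ}` with `(a,b)`-entry `1` iff `β·(−a+b) = γ`. -/
def permP {K : Type*} [Field K] [DecidableEq K] (β γ : K) : Matrix K K ℝ :=
  Matrix.of fun a b => if β * (-a + b) = γ then 1 else 0

/-- The matrix `N_β = Σ_{γ∈K∖{0}} P_{β,γ} ⊗ C_{ψ(γ)}` of the twin prime power
construction, where `ψ : K∖{0} → F ∪ {y}` is a fixed bijection. -/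
def NN {F K : Type*} [Field F] [Fintype F] [DecidableEq F]
    [Field K] [Fintype K] [DecidableEq K]
    (ψ : {x : K // x ≠ 0} ≃ Option F) (β : K) :
    Matrix (K × (F × F)) (K × (F × F)) ℝ :=
  ∑ γ : {x : K // x ≠ 0}, permP β (γ : K) ⊗ₖ auxC (ψ γ)

/-!
Every `C_a` is symmetric with row sums `q`, because each line of the affine plane `F × F` has `q`
points. Multiplying `N_β` by `I ⊗ J` on either side therefore replaces every factor `C_{ψ(γ)}` by
`q J`, so only `∑_{γ ≠ 0} P_{β,γ}` remains to be found. It is `J - I`, since the `P_{β,γ}` over all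
`γ ∈ K` sum to `J` and `P_{β,0} = I`.
-/

section Kronecker

variable {ι l m n p r : Type*}

theorem sub_kronecker {R : Type*} [NonUnitalNonAssocRing R] (A₁ A₂ : Matrix l m R)
    (B : Matrix n p R) : (A₁ - A₂) ⊗ₖ B = A₁ ⊗ₖ B - A₂ ⊗ₖ B :=
  ext fun _ _ => sub_mul ..

theorem sum_kronecker {R : Type*} [NonUnitalNonAssocSemiring R] (s : Finset ι)
    (A : ι → Matrix l m R) (B : Matrix n p R) :
    (∑ i ∈ s, A i) ⊗ₖ B = ∑ i ∈ s, A i ⊗ₖ B := by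
  ext
  simp only [kroneckerMap_apply, Matrix.sum_apply, Finset.sum_mul]

variable {R : Type*} [CommSemiring R]

theorem sum_kronecker_mul_one_kronecker [Fintype m] [DecidableEq m] [Fintype n] (s : Finset ι)
    (P : ι → Matrix l m R) {A : ι → Matrix p n R} {J : Matrix n r R} {B : Matrix p r R}
    (h : ∀ i ∈ s, A i * J = B) :
    (∑ i ∈ s, P i ⊗ₖ A i) * ((1 : Matrix m m R) ⊗ₖ J) = (∑ i ∈ s, P i) ⊗ₖ B := by
  rw [Matrix.sum_mul, sum_kronecker]
  refine Finset.sum_congr rfl fun i hi => ?_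
  rw [← mul_kronecker_mul, Matrix.mul_one, h i hi]

theorem one_kronecker_mul_sum_kronecker [Fintype l] [DecidableEq l] [Fintype n] (s : Finset ι)
    (P : ι → Matrix l m R) {A : ι → Matrix n p R} {J : Matrix r n R} {B : Matrix r p R}
    (h : ∀ i ∈ s, J * A i = B) :
    ((1 : Matrix l l R) ⊗ₖ J) * (∑ i ∈ s, P i ⊗ₖ A i) = (∑ i ∈ s, P i) ⊗ₖ B := by
  rw [Matrix.mul_sum, sum_kronecker]
  refine Finset.sum_congr rfl fun i hi => ?_
  rw [← mul_kronecker_mul, Matrix.one_mul, h i hi]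

end Kronecker

section AllOnes

theorem isSymm_allOnes (n : Type*) : (allOnes n).IsSymm := rfl

theorem mul_allOnes_eq_smul {n : Type*} [Fintype n] {A : Matrix n n ℝ} {c : ℝ}
    (h : ∀ i, ∑ j, A i j = c) : A * allOnes n = c • allOnes n := by
  ext i j
  simp [allOnes, mul_apply, h]

theorem allOnes_kronecker_allOnes (m n : Type*) :
    allOnes m ⊗ₖ allOnes n = allOnes (m × n) := by
  ext
  simp [allOnes]

end AllOnes

section AuxC

variable {F : Type*} [Field F] [Fintype F] [DecidableEq F]

theorem isSymm_auxC (a : Option F) : (auxC a).IsSymm := by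
  ext p r
  cases a with
  | none => simp only [auxC, transpose_apply, of_apply, eq_comm]
  | some α =>
    have h : p.2 - r.2 = α * (p.1 - r.1) ↔ r.2 - p.2 = α * (r.1 - p.1) := by
      rw [← neg_inj, neg_sub, ← mul_neg, neg_sub]
    simp only [auxC, transpose_apply, of_apply, h]

theorem sum_auxC_apply (a : Option F) (p : F × F) :
    ∑ r, auxC a p r = Fintype.card F := by
  cases a with
  | none =>
    have sum_fst (y : F) : ∑ x, auxC none p (x, y) = 1 := by simp [auxC, -Finset.sum_boole]
    simp [Fintype.sum_prod_type_right, sum_fst]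
  | some α =>
    have sum_snd (x : F) : ∑ y, auxC (some α) p (x, y) = 1 := by
      simp [auxC, sub_eq_iff_eq_add, -Finset.sum_boole]
    simp [Fintype.sum_prod_type, sum_snd]

theorem auxC_mul_allOnes (a : Option F) :
    auxC a * allOnes (F × F) = (Fintype.card F : ℝ) • allOnes (F × F) :=
  mul_allOnes_eq_smul (sum_auxC_apply a)

theorem allOnes_mul_auxC (a : Option F) :
    allOnes (F × F) * auxC a = (Fintype.card F : ℝ) • allOnes (F × F) := by
  simpa only [transpose_mul, transpose_smul, (isSymm_auxC a).eq, (isSymm_allOnes _).eq]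
    using congrArg transpose (auxC_mul_allOnes a)

end AuxC

section PermP

variable {K : Type*} [Field K] [DecidableEq K]

theorem permP_zero {β : K} (hβ : β ≠ 0) : permP β 0 = 1 := by
  ext a b
  simp only [permP, of_apply, one_apply, mul_eq_zero, hβ, false_or, neg_add_eq_zero]

variable [Fintype K]

theorem sum_permP (β : K) : ∑ γ, permP β γ = allOnes K := by
  ext a b
  simp only [Matrix.sum_apply, permP, allOnes, of_apply, Finset.sum_ite_eq, Finset.mem_univ,
    if_true]

theorem sum_permP_ne_zero {β : K} (hβ : β ≠ 0) :
    ∑ γ : {x : K // x ≠ 0}, permP β (γ : K) = allOnes K - 1 := by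
  rw [eq_sub_iff_add_eq', ← permP_zero hβ, ← sum_permP β,
    Fintype.sum_eq_add_sum_subtype_ne (permP β) 0]

theorem sum_permP_ne_zero_kronecker_smul_allOnes {β : K} (hβ : β ≠ 0) (n : Type*) (c : ℝ) :
    (∑ γ : {x : K // x ≠ 0}, permP β (γ : K)) ⊗ₖ (c • allOnes n) =
      c • (allOnes (K × n) - (1 : Matrix K K ℝ) ⊗ₖ allOnes n) := by
  rw [sum_permP_ne_zero hβ, kronecker_smul, sub_kronecker, allOnes_kronecker_allOnes]

end PermP

theorem NN_mul_blockdiag_general {F K : Type*} [Field F] [Fintype F] [DecidableEq F]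
    [Field K] [Fintype K] [DecidableEq K]
    (ψ : {x : K // x ≠ 0} → Option F) {β : K} (hβ : β ≠ 0) :
    (∑ γ : {x : K // x ≠ 0}, permP β (γ : K) ⊗ₖ auxC (ψ γ)) *
        ((1 : Matrix K K ℝ) ⊗ₖ allOnes (F × F)) =
      (Fintype.card F : ℝ) •
        (allOnes (K × (F × F)) - (1 : Matrix K K ℝ) ⊗ₖ allOnes (F × F)) ∧
    ((1 : Matrix K K ℝ) ⊗ₖ allOnes (F × F)) *
        (∑ γ : {x : K // x ≠ 0}, permP β (γ : K) ⊗ₖ auxC (ψ γ)) =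
      (Fintype.card F : ℝ) •
        (allOnes (K × (F × F)) - (1 : Matrix K K ℝ) ⊗ₖ allOnes (F × F)) := by
  rw [sum_kronecker_mul_one_kronecker _ _ fun γ _ => auxC_mul_allOnes (ψ γ),
    one_kronecker_mul_sum_kronecker _ _ fun γ _ => allOnes_mul_auxC (ψ γ), and_self,
    sum_permP_ne_zero_kronecker_smul_allOnes hβ]

/-- In the twin prime power construction,
`N_β · (I_{q+2} ⊗ J_{q²}) = (I_{q+2} ⊗ J_{q²}) · N_β = q·(J − I_{q+2} ⊗ J_{q²})`. -/
theorem NN_mul_blockdiag {F K : Type*} [Field F] [Fintype F] [DecidableEq F]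
    [Field K] [Fintype K] [DecidableEq K]
    (hcard : Fintype.card K = Fintype.card F + 2)
    (ψ : {x : K // x ≠ 0} ≃ Option F) (β : K) (hβ : β ≠ 0) :
    NN ψ β * ((1 : Matrix K K ℝ) ⊗ₖ allOnes (F × F)) =
      (Fintype.card F : ℝ) •
        (allOnes (K × (F × F)) - (1 : Matrix K K ℝ) ⊗ₖ allOnes (F × F)) ∧
    ((1 : Matrix K K ℝ) ⊗ₖ allOnes (F × F)) * NN ψ β =
      (Fintype.card F : ℝ) •
        (allOnes (K × (F × F)) - (1 : Matrix K K ℝ) ⊗ₖ allOnes (F × F)) :=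
  NN_mul_blockdiag_general ψ hβ
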